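/- arXiv:1610.01987 — 3 statements merged into one kernel-verified Lean document; each statement's English description precedes it below -/
import Mathlib

section
/- For every integer n ≥ 1, d_n = Der_n + Der_{n−1}; that is, the number of arrangements of {1,…,n} avoiding all patterns 12, 23, …, (n−1)n equals the sum of the n-th and (n−1)-st derangement numbers. -/
/-- The arrangement (one-line notation) of `σ` avoids all patterns
`12, 23, …, (n-1)n`: digit `i` (encoded as the value `i-1` in `Fin n`)
is never immediately followed by digit `i+1`. -/
def avoidsSucc (n : ℕ) (σ : Equiv.Perm (Fin n)) : Prop :=
  ∀ (k : ℕ) (h : k + 1 < n),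
    (σ ⟨k + 1, h⟩).val ≠ (σ ⟨k, Nat.lt_of_succ_lt h⟩).val + 1

/-- The arrangement of `σ` contains the pattern `n1`: digit `n` (value `n-1`)
is immediately followed by digit `1` (value `0`). -/
def containsN1 (n : ℕ) (σ : Equiv.Perm (Fin n)) : Prop :=
  ∃ (k : ℕ) (h : k + 1 < n),
    (σ ⟨k, Nat.lt_of_succ_lt h⟩).val = n - 1 ∧ (σ ⟨k + 1, h⟩).val = 0

/-- `dCount n` = number of arrangements of `{1,…,n}` avoiding `12, 23, …, (n-1)n`. -/
noncomputable def dCount (n : ℕ) : ℕ :=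
  Nat.card {σ : Equiv.Perm (Fin n) // avoidsSucc n σ}

/-- `DCount n` = number of arrangements of `{1,…,n}` avoiding `12, 23, …, (n-1)n, n1`. -/
noncomputable def DCount (n : ℕ) : ℕ :=
  Nat.card {σ : Equiv.Perm (Fin n) // avoidsSucc n σ ∧ ¬ containsN1 n σ}

/-- `i` is immediately followed by `i+1`, in terms of the position permutation. -/
def wordSucc {n : ℕ} (π : Equiv.Perm (Fin n)) (i : ℕ) : Prop :=
  ∃ a b : Fin n, a.val = i ∧ b.val = i + 1 ∧ (π b).val = (π a).val + 1

/-- The permutation sends `i` to `i+1`. -/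
def mapSucc {n : ℕ} (τ : Equiv.Perm (Fin n)) (i : ℕ) : Prop :=
  ∃ a : Fin n, a.val = i ∧ (τ a).val = i + 1

/-- The position at which the new largest letter is inserted. -/
def insPos {n : ℕ} (p : Option (Fin n)) (π : Equiv.Perm (Fin n)) : Fin (n + 1) :=
  (finSuccEquiv n).symm (p.map π)

/-- Insert the largest letter in a word. -/
def insWord {n : ℕ} (x : Option (Fin n) × Equiv.Perm (Fin n)) : Equiv.Perm (Fin (n + 1)) :=
  (finSuccEquivLast.trans (Equiv.optionCongr x.2)).trans (finSuccEquiv' (insPos x.1 x.2)).symm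

/-- Insert the largest letter in a cycle. -/
def insCyc {n : ℕ} (x : Option (Fin n) × Equiv.Perm (Fin n)) : Equiv.Perm (Fin (n + 1)) :=
  (finSuccEquivLast.trans ((Equiv.swap none x.1).trans (Equiv.optionCongr x.2))).trans
    finSuccEquivLast.symm

lemma insWord_last {n : ℕ} (p : Option (Fin n)) (π : Equiv.Perm (Fin n)) :
    insWord (p, π) (Fin.last n) = insPos p π := by
  simp [insWord]

lemma insWord_castSucc {n : ℕ} (p : Option (Fin n)) (π : Equiv.Perm (Fin n)) (x : Fin n) :
    insWord (p, π) x.castSucc = (insPos p π).succAbove (π x) := by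
  simp [insWord]

lemma insWord_injective {n : ℕ} : Function.Injective (insWord (n := n)) := by
  rintro ⟨p, π⟩ ⟨p', π'⟩ h
  have h1 : insPos p π = insPos p' π' := by
    rw [← insWord_last, ← insWord_last, h]
  have h2 : π = π' := by
    ext x : 1
    have := congrArg (fun f => f x.castSucc) h
    simp only [insWord_castSucc, h1] at this
    exact Fin.succAbove_right_injective this
  subst h2
  have h3 := (finSuccEquiv n).symm.injective h1
  have h4 := Option.map_injective π.injective h3
  rw [h4]

lemma insCyc_last {n : ℕ} (p : Option (Fin n)) (τ : Equiv.Perm (Fin n)) :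
    insCyc (p, τ) (Fin.last n) = finSuccEquivLast.symm (p.map τ) := by
  simp [insCyc]

lemma insCyc_castSucc {n : ℕ} (p : Option (Fin n)) (τ : Equiv.Perm (Fin n)) (x : Fin n) :
    insCyc (p, τ) x.castSucc = if p = some x then Fin.last n else (τ x).castSucc := by
  split_ifs with h
  · simp [insCyc, h]
  · have : (Equiv.swap none p) (some x) = some x :=
      Equiv.swap_apply_of_ne_of_ne (by simp) (fun h' => h h'.symm)
    simp [insCyc, this]

lemma insCyc_injective {n : ℕ} : Function.Injective (insCyc (n := n)) := by
  rintro ⟨p, π⟩ ⟨p', π'⟩ h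
  have key : ∀ (q : Option (Fin n)) (π : Equiv.Perm (Fin n)),
      (insCyc (q, π)).symm (Fin.last n) = finSuccEquivLast.symm q := by
    intro q π
    rw [Equiv.symm_apply_eq]
    simp [insCyc]
  have h1 : p = p' := by
    apply finSuccEquivLast.symm.injective
    rw [← key p π, ← key p' π', h]
  subst h1
  have h2 : Equiv.optionCongr π = Equiv.optionCongr π' := by
    ext1 x
    have := congrArg (fun f => f (finSuccEquivLast.symm (Equiv.swap none p x))) h
    simpa [insCyc] using this
  rw [Equiv.optionCongr_injective h2]

lemma ins_bij {n : ℕ} (f : Option (Fin n) × Equiv.Perm (Fin n) → Equiv.Perm (Fin (n + 1)))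
    (hf : Function.Injective f) : Function.Bijective f := by
  rw [Fintype.bijective_iff_injective_and_card]
  refine ⟨hf, ?_⟩
  simp [Fintype.card_perm, Nat.factorial_succ]

lemma wordSucc_ins {n : ℕ} (p : Option (Fin n)) (π : Equiv.Perm (Fin n)) (i : ℕ) :
    wordSucc (insWord (p, π)) i ↔
      (wordSucc π i ∧ ∀ x, p = some x → x.val ≠ i) ∨ (i + 1 = n ∧ ∃ x, p = some x ∧ x.val = i) := by
  have hq : (p = none ∧ (insPos p π).val = 0) ∨ ∃ x, p = some x ∧
      (insPos p π).val = (π x).val + 1 := by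
    cases p with
    | none => left; simp [insPos]
    | some x => right; exact ⟨x, rfl, by simp [insPos]⟩
  have hinj : ∀ x y : Fin n, (π x).val = (π y).val → x = y :=
    fun x y h => π.injective (Fin.ext h)
  have hv : ∀ y : Fin n, ((insPos p π).succAbove y).val =
      if y.val < (insPos p π).val then y.val else y.val + 1 := by
    intro y
    simp only [Fin.succAbove, Fin.lt_def, Fin.val_castSucc]
    split_ifs <;> simp
  constructor
  · rintro ⟨a, b, ha, hb, hab⟩
    cases a using Fin.lastCases with
    | last => have := b.2; simp at ha; omega
    | cast a =>
      cases b using Fin.lastCases with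
      | last =>
        right
        rw [insWord_last, insWord_castSucc, hv] at hab
        simp at ha hb
        refine ⟨by omega, ?_⟩
        rcases hq with ⟨_, h⟩ | ⟨x, hx, h⟩
        · split_ifs at hab <;> omega
        · refine ⟨x, hx, ?_⟩
          have : x = a := hinj _ _ (by split_ifs at hab <;> omega)
          rw [this, ha]
      | cast b =>
        left
        rw [insWord_castSucc, insWord_castSucc, hv, hv] at hab
        simp at ha hb
        refine ⟨⟨a, b, ha, hb, ?_⟩, ?_⟩
        · have : π a ≠ π b := fun h => by have := π.injective h; subst this; omega
          have : (π a).val ≠ (π b).val := fun h => this (Fin.ext h)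
          split_ifs at hab <;> omega
        · rintro x rfl hxi
          have : x = a := Fin.ext (by omega)
          subst this
          have : (insPos (some x) π).val = (π x).val + 1 := by simp [insPos]
          split_ifs at hab <;> omega
  · rintro (⟨⟨a, b, ha, hb, hab⟩, hp⟩ | ⟨hi, x, rfl, hx⟩)
    · refine ⟨a.castSucc, b.castSucc, by simpa using ha, by simpa using hb, ?_⟩
      rw [insWord_castSucc, insWord_castSucc, hv, hv]
      have : (insPos p π).val ≠ (π a).val + 1 := by
        rcases hq with ⟨_, h⟩ | ⟨x, hx, h⟩
        · omega
        · intro h'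
          have : x = a := hinj _ _ (by omega)
          exact hp x hx (by rw [this, ha])
      split_ifs <;> omega
    · refine ⟨x.castSucc, Fin.last n, by simpa using hx, by simp [hi], ?_⟩
      have : (insPos (some x) π).val = (π x).val + 1 := by simp [insPos]
      rw [insWord_last, insWord_castSucc, hv]
      split_ifs <;> omega

lemma mapSucc_ins {n : ℕ} (p : Option (Fin n)) (π : Equiv.Perm (Fin n)) (i : ℕ) :
    mapSucc (insCyc (p, π)) i ↔
      (mapSucc π i ∧ ∀ x, p = some x → x.val ≠ i) ∨ (i + 1 = n ∧ ∃ x, p = some x ∧ x.val = i) := by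
  constructor
  · rintro ⟨a, ha, hab⟩
    cases a using Fin.lastCases with
    | last =>
      have := (insCyc (p, π) (Fin.last n)).2
      simp at ha; omega
    | cast a =>
      simp at ha
      rw [insCyc_castSucc] at hab
      split_ifs at hab with h
      · right
        exact ⟨by simpa using hab.symm, a, h, ha⟩
      · left
        refine ⟨⟨a, ha, by simpa using hab⟩, ?_⟩
        rintro x rfl hx
        exact h (by rw [Fin.ext (hx.trans ha.symm)])
  · rintro (⟨⟨a, ha, hab⟩, hp⟩ | ⟨hi, x, rfl, hx⟩)
    · refine ⟨a.castSucc, by simpa using ha, ?_⟩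
      rw [insCyc_castSucc, if_neg (fun h => hp a h ha)]
      simpa using hab
    · refine ⟨x.castSucc, by simpa using hx, ?_⟩
      rw [insCyc_castSucc, if_pos rfl]
      simp [hi]

lemma exists_foata (n : ℕ) : ∃ Φ : Equiv.Perm (Fin n) ≃ Equiv.Perm (Fin n),
    ∀ π i, wordSucc π i ↔ mapSucc (Φ π) i := by
  induction n with
  | zero => exact ⟨Equiv.refl _, fun π i => ⟨fun ⟨a, _⟩ => a.elim0, fun ⟨a, _⟩ => a.elim0⟩⟩
  | succ n ih =>
    obtain ⟨Φ, hΦ⟩ := ih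
    let e1 := Equiv.ofBijective _ (ins_bij _ (insWord_injective (n := n)))
    let e2 := Equiv.ofBijective _ (ins_bij _ (insCyc_injective (n := n)))
    refine ⟨e1.symm.trans (((Equiv.refl _).prodCongr Φ).trans e2), ?_⟩
    intro π i
    obtain ⟨⟨p, π⟩, rfl⟩ := e1.surjective π
    simp only [Equiv.trans_apply, Equiv.symm_apply_apply]
    change wordSucc (insWord (p, π)) i ↔ mapSucc (insCyc (p, Φ π)) i
    rw [wordSucc_ins, mapSucc_ins, hΦ]

lemma avoids_iff {n : ℕ} (σ : Equiv.Perm (Fin n)) :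
    avoidsSucc n σ ↔ ∀ i, ¬ wordSucc σ.symm i := by
  constructor
  · rintro h i ⟨a, b, ha, hb, hab⟩
    have hlt : (σ.symm a).val + 1 < n := hab ▸ (σ.symm b).2
    apply h (σ.symm a).val hlt
    have e : (⟨(σ.symm a).val + 1, hlt⟩ : Fin n) = σ.symm b := Fin.ext hab.symm
    rw [e]
    simp [ha, hb]
  · intro h k hk hs
    exact h _ ⟨_, _, rfl, hs, by simp⟩

lemma fixed_iff {m : ℕ} (τ : Equiv.Perm (Fin (m + 1))) :
    (∀ i, ¬ mapSucc τ i) ↔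
      Function.fixedPoints (τ.trans (finRotate (m + 1)).symm) ⊆ {Fin.last m} := by
  constructor
  · intro h a ha
    by_contra hne
    have hne' : a ≠ Fin.last m := hne
    have h1 : (finRotate (m + 1)).symm (τ a) = a := ha
    rw [Equiv.symm_apply_eq] at h1
    exact h a.val ⟨a, rfl, by rw [h1, coe_finRotate_of_ne_last hne']⟩
  · rintro h i ⟨a, rfl, hab⟩
    have hne : a ≠ Fin.last m := by
      rintro rfl
      have := (τ (Fin.last m)).2
      simp at hab; omega
    apply hne
    apply h
    change (finRotate (m + 1)).symm (τ a) = a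
    rw [Equiv.symm_apply_eq]
    apply Fin.ext
    rw [hab, coe_finRotate_of_ne_last hne]

theorem stmt_3 (n : ℕ) (hn : 1 ≤ n) :
    dCount n = numDerangements n + numDerangements (n - 1) := by
  obtain ⟨m, rfl⟩ : ∃ m, n = m + 1 := ⟨n - 1, by omega⟩
  obtain ⟨Φ, hΦ⟩ := exists_foata (m + 1)
  let R : Equiv.Perm (Fin (m + 1)) ≃ Equiv.Perm (Fin (m + 1)) :=
    (Equiv.refl _).equivCongr (finRotate (m + 1)).symm
  let E : Equiv.Perm (Fin (m + 1)) ≃ Equiv.Perm (Fin (m + 1)) :=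
    (Equiv.symmEquiv _ _).trans (Φ.trans R)
  have hE : ∀ σ, avoidsSucc (m + 1) σ ↔ Function.fixedPoints (E σ) ⊆ {Fin.last m} := by
    intro σ
    rw [avoids_iff]
    simp only [hΦ]
    rw [fixed_iff]
    rfl
  unfold dCount
  classical
  rw [Nat.card_congr ((E.subtypeEquiv hE).trans
    (derangements.atMostOneFixedPointEquivSum_derangements (Fin.last m))), Nat.card_sum,
    Nat.card_eq_fintype_card, Nat.card_eq_fintype_card, card_derangements_eq_numDerangements,
    card_derangements_eq_numDerangements, add_comm]
  congr 2
  · simp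
  · rw [Fintype.card_compl_set]; simp
end

section
/- For every integer n ≥ 3, the recursion D_n = (n−1)·(D_{n−1} + D_{n−2}) + (−1)^{n−1} holds, as an identity in the integers. -/
/-- Value of a permutation of `Fin n` at a natural number (junk value `0`). -/
def pv (n : ℕ) (τ : Equiv.Perm (Fin n)) (i : ℕ) : ℕ := if h : i < n then (τ ⟨i, h⟩).val else 0

/-- cyclic successor -/
def nx (n i : ℕ) : ℕ := if i + 1 < n then i + 1 else 0

def adjAt (n : ℕ) (τ : Equiv.Perm (Fin n)) (i : ℕ) : Prop := pv n τ (nx n i) = pv n τ i + 1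

/-- Number of permutations avoiding the first `k` cyclic arcs. -/
noncomputable def cCount (n k : ℕ) : ℕ :=
  Nat.card {τ : Equiv.Perm (Fin n) // ∀ i < k, ¬ adjAt n τ i}

lemma pv_inj {n : ℕ} {τ : Equiv.Perm (Fin n)} {i j : ℕ} (hi : i < n) (hj : j < n)
    (h : pv n τ i = pv n τ j) : i = j := by
  simp only [pv, hi, hj, dif_pos] at h
  have := τ.injective (Fin.ext h)
  simpa using this

lemma pv_lt {n : ℕ} (τ : Equiv.Perm (Fin n)) {i : ℕ} (hi : i < n) : pv n τ i < n := by
  simp only [pv, hi, dif_pos]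
  exact Fin.isLt _

lemma ext_pv {n : ℕ} {τ τ' : Equiv.Perm (Fin n)} (h : ∀ i < n, pv n τ i = pv n τ' i) :
    τ = τ' := by
  ext i
  have := h i i.2
  simpa [pv] using this

/-- Insert `k ↦ p` in `e`. -/
def ins {n : ℕ} (k p : Fin (n + 1)) (e : Equiv.Perm (Fin n)) : Equiv.Perm (Fin (n + 1)) :=
  ((finSuccEquiv' k).trans (Equiv.optionCongr e)).trans (finSuccEquiv' p).symm

lemma ins_at {n : ℕ} (k p : Fin (n + 1)) (e : Equiv.Perm (Fin n)) : ins k p e k = p := by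
  simp [ins]

lemma ins_succAbove {n : ℕ} (k p : Fin (n + 1)) (e : Equiv.Perm (Fin n)) (i : Fin n) :
    ins k p e (k.succAbove i) = p.succAbove (e i) := by
  simp [ins]

lemma ins_surj {n : ℕ} (k : Fin (n + 1)) (τ : Equiv.Perm (Fin (n + 1))) :
    ∃ e, ins k (τ k) e = τ := by
  let g : Option (Fin n) ≃ Option (Fin n) :=
    ((finSuccEquiv' k).symm.trans τ).trans (finSuccEquiv' (τ k))
  have hg : g none = none := by simp [g]
  have h2 : Equiv.optionCongr (Equiv.removeNone g) = g := by
    ext x : 1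
    cases x with
    | none => simp [hg]
    | some x =>
      simp only [Equiv.optionCongr_apply, Option.map_some]
      refine Equiv.removeNone_some g ?_
      cases hx : g (some x) with
      | none => exact absurd (g.injective (hx.trans hg.symm)) (by simp)
      | some y => exact ⟨y, rfl⟩
  refine ⟨Equiv.removeNone g, ?_⟩
  simp only [ins, h2]
  ext x
  simp [g]

lemma pv_ins_at {n : ℕ} (k p : ℕ) (hk : k < n + 1) (hp : p < n + 1) (e : Equiv.Perm (Fin n)) :
    pv (n + 1) (ins ⟨k, hk⟩ ⟨p, hp⟩ e) k = p := by
  simp [pv, hk, ins_at]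

lemma pv_ins {n : ℕ} (k p : ℕ) (hk : k < n + 1) (hp : p < n + 1) (e : Equiv.Perm (Fin n))
    (i : ℕ) (hi : i < n) :
    pv (n + 1) (ins ⟨k, hk⟩ ⟨p, hp⟩ e) (if i < k then i else i + 1) =
      if pv n e i < p then pv n e i else pv n e i + 1 := by
  have h := congrArg Fin.val (ins_succAbove ⟨k, hk⟩ ⟨p, hp⟩ e ⟨i, hi⟩)
  have e1 : (⟨k, hk⟩ : Fin (n + 1)).succAbove ⟨i, hi⟩ =
      ⟨if i < k then i else i + 1, by split_ifs <;> omega⟩ := by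
    ext
    simp only [Fin.succAbove, Fin.lt_def]
    split_ifs <;> simp_all
  have e2 : ((⟨p, hp⟩ : Fin (n + 1)).succAbove (e ⟨i, hi⟩)).val =
      if pv n e i < p then pv n e i else pv n e i + 1 := by
    simp only [Fin.succAbove, Fin.lt_def, pv, hi, dif_pos]
    split_ifs <;> simp_all
  rw [e1, e2] at h
  rw [← h]
  have : (if i < k then i else i + 1) < n + 1 := by split_ifs <;> omega
  simp only [pv, this, dif_pos]

lemma merge_key {n k : ℕ} (hn : 1 ≤ n) (hk : k < n + 1) (e : Equiv.Perm (Fin n)) (p : ℕ)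
    (hp : p < n + 1) (hpe : p = pv n e (if k < n then k else 0)) :
    (∀ i < k, adjAt (n + 1) (ins ⟨k, hk⟩ ⟨p, hp⟩ e) i ↔ adjAt n e i) ∧
      adjAt (n + 1) (ins ⟨k, hk⟩ ⟨p, hp⟩ e) k := by
  have hat := pv_ins_at k p hk hp e
  have hin := pv_ins k p hk hp e
  have inj := @pv_inj n e
  simp only [adjAt]
  generalize pv (n + 1) (ins ⟨k, hk⟩ ⟨p, hp⟩ e) = g at *
  generalize pv n e = f at *
  constructor
  · intro i hik
    have h1 := hin i (by omega)
    rw [if_pos hik] at h1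
    by_cases hc : i + 1 = k
    · have hx : nx (n + 1) i = k := by simp only [nx]; split_ifs <;> omega
      have hy : nx n i = if k < n then k else 0 := by simp only [nx]; split_ifs <;> omega
      rw [hx, hy, ← hpe, hat, h1]
      split_ifs <;> omega
    · have hx : nx (n + 1) i = i + 1 := by simp only [nx]; split_ifs <;> omega
      have hy : nx n i = i + 1 := by simp only [nx]; split_ifs <;> omega
      have h2 := hin (i + 1) (by omega)
      rw [if_pos (by omega)] at h2
      have h3 : f (i + 1) ≠ p := by
        intro h
        rw [hpe] at h
        have := inj (by omega) (by split_ifs <;> omega) h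
        split_ifs at this <;> omega
      rw [hx, hy, h1, h2]
      split_ifs <;> omega
  · have h1 := hin (if k < n then k else 0) (by split_ifs <;> omega)
    have hx : nx (n + 1) k = if (if k < n then k else 0) < k then (if k < n then k else 0)
        else (if k < n then k else 0) + 1 := by
      simp only [nx]; split_ifs <;> omega
    rw [hx, h1, hat, ← hpe]
    simp

/-- The merging map. -/
def mergeMap {n k : ℕ} (hn : 1 ≤ n) (hk : k < n + 1) (e : Equiv.Perm (Fin n)) :
    Equiv.Perm (Fin (n + 1)) :=
  ins ⟨k, hk⟩ ⟨pv n e (if k < n then k else 0),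
    (pv_lt e (by split_ifs <;> omega)).trans (Nat.lt_succ_self n)⟩ e

lemma merge_inj {n k : ℕ} (hn : 1 ≤ n) (hk : k < n + 1) :
    Function.Injective (mergeMap hn hk) := by
  intro e e' h
  have hp := congrArg (fun t => t ⟨k, hk⟩) h
  simp only [mergeMap, ins_at] at hp
  simp only [mergeMap, hp] at h
  ext i : 1
  have := congrArg (fun t => t ((⟨k, hk⟩ : Fin (n + 1)).succAbove i)) h
  simp only [ins_succAbove] at this
  exact Fin.succAbove_right_injective this

lemma merge_surj {n k : ℕ} (hn : 1 ≤ n) (hk : k < n + 1) (τ : Equiv.Perm (Fin (n + 1)))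
    (h : adjAt (n + 1) τ k) : ∃ e, mergeMap hn hk e = τ := by
  obtain ⟨e, he⟩ := ins_surj ⟨k, hk⟩ τ
  refine ⟨e, ?_⟩
  suffices hs : pv n e (if k < n then k else 0) = (τ ⟨k, hk⟩).val by
    simp only [mergeMap, hs]
    exact he
  have h1 := pv_ins k (τ ⟨k, hk⟩).val hk (Fin.isLt _) e (if k < n then k else 0)
    (by split_ifs <;> omega)
  have hx : nx (n + 1) k = if (if k < n then k else 0) < k then (if k < n then k else 0)
      else (if k < n then k else 0) + 1 := by
    simp only [nx]; split_ifs <;> omega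
  have hk' : pv (n + 1) τ k = (τ ⟨k, hk⟩).val := by simp [pv, hk]
  simp only [Fin.eta, he] at h1
  rw [adjAt, hx, h1, hk'] at h
  generalize pv n e (if k < n then k else 0) = a at *
  split_ifs at h <;> omega

lemma cCount_succ {n k : ℕ} (hn : 1 ≤ n) (hk : k < n + 1) :
    cCount (n + 1) k = cCount (n + 1) (k + 1) + cCount n k := by
  classical
  have h1 : cCount n k = Nat.card {τ : Equiv.Perm (Fin (n + 1)) //
      (∀ i < k, ¬ adjAt (n + 1) τ i) ∧ adjAt (n + 1) τ k} := by
    have key := fun e : Equiv.Perm (Fin n) => merge_key hn hk e _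
      ((pv_lt e (by split_ifs <;> omega)).trans (Nat.lt_succ_self n)) rfl
    refine Nat.card_congr (Equiv.ofBijective
      (fun e => ⟨mergeMap hn hk e.1, fun i hi h => e.2 i hi (((key e.1).1 i hi).1 h),
        (key e.1).2⟩) ⟨?_, ?_⟩)
    · intro a b h
      exact Subtype.ext (merge_inj hn hk (congrArg Subtype.val h))
    · rintro ⟨τ, h2, h3⟩
      obtain ⟨e, rfl⟩ := merge_surj hn hk τ h3
      exact ⟨⟨e, fun i hi h => h2 i hi (((key e).1 i hi).2 h)⟩, rfl⟩
  rw [h1]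
  simp only [cCount, Nat.card_eq_fintype_card, Fintype.card_subtype]
  rw [← Finset.card_union_of_disjoint]
  · congr 1
    ext τ
    simp only [Finset.mem_filter, Finset.mem_univ, true_and, Finset.mem_union,
      Order.lt_add_one_iff, Nat.le_iff_lt_or_eq]
    by_cases hh : adjAt (n + 1) τ k
    · constructor
      · exact fun h => Or.inr ⟨h, hh⟩
      · rintro (h | h)
        · exact fun i hi => h i (Or.inl hi)
        · exact h.1
    · constructor
      · intro h
        left
        rintro i (hi | rfl)
        · exact h i hi
        · exact hh
      · rintro (h | h)
        · exact fun i hi => h i (Or.inl hi)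
        · exact h.1
  · rw [Finset.disjoint_filter]
    rintro τ - h ⟨-, h2⟩
    exact h k (Nat.lt_succ_self k) h2

lemma cCount_zero (n : ℕ) : cCount n 0 = n.factorial := by
  have : cCount n 0 = Nat.card (Equiv.Perm (Fin n)) :=
    Nat.card_congr (Equiv.subtypeUnivEquiv (by simp))
  rw [this, Nat.card_perm, Nat.card_fin]

lemma DCount_eq (n : ℕ) (hn : 1 ≤ n) : DCount n = cCount n n := by
  refine Nat.card_congr ((Equiv.inv (Equiv.Perm (Fin n))).subtypeEquiv ?_)
  intro σ
  have hv : ∀ i (hi : i < n), pv n σ⁻¹ i = (σ⁻¹ ⟨i, hi⟩).val := fun i hi => by simp [pv, hi]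
  change _ ↔ ∀ i < n, ¬ adjAt n σ⁻¹ i
  constructor
  · rintro ⟨h1, h2⟩ i hi hadj
    unfold adjAt nx at hadj
    have hlt : (σ⁻¹ ⟨i, hi⟩).val < n := Fin.isLt _
    by_cases hc : i + 1 < n
    · rw [if_pos hc, hv _ hc, hv _ hi] at hadj
      have hlt' : (σ⁻¹ ⟨i, hi⟩).val + 1 < n := hadj ▸ Fin.isLt _
      refine h1 _ hlt' ?_
      have e1 : (⟨(σ⁻¹ ⟨i, hi⟩).val + 1, hlt'⟩ : Fin n) = σ⁻¹ ⟨i + 1, hc⟩ := Fin.ext hadj.symm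
      rw [e1]
      simp
    · rw [if_neg hc, hv _ (by omega), hv _ hi] at hadj
      have hlt' : (σ⁻¹ ⟨i, hi⟩).val + 1 < n := hadj ▸ Fin.isLt _
      refine h2 ⟨_, hlt', ?_, ?_⟩
      · simp; omega
      · have e1 : (⟨(σ⁻¹ ⟨i, hi⟩).val + 1, hlt'⟩ : Fin n) = σ⁻¹ ⟨0, by omega⟩ :=
          Fin.ext hadj.symm
        rw [e1]
        simp
  · intro h
    have back : ∀ (k : ℕ) (hk : k < n) (v : ℕ), (σ ⟨k, hk⟩).val = v → pv n σ⁻¹ v = k := by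
      rintro k hk v rfl
      rw [hv _ (Fin.isLt _)]
      simp
    constructor
    · intro k hk hs
      have b1 := back _ _ _ hs
      have b2 := back k (Nat.lt_of_succ_lt hk) _ rfl
      refine h _ (Fin.isLt (σ ⟨k, Nat.lt_of_succ_lt hk⟩)) ?_
      have : (σ ⟨k, Nat.lt_of_succ_lt hk⟩).val + 1 < n := hs ▸ Fin.isLt _
      rw [adjAt, nx, if_pos this, b1, b2]
    · rintro ⟨k, hk, h1, h2⟩
      have b1 := back _ _ _ h1
      have b2 := back _ _ _ h2
      refine h (n - 1) (by omega) ?_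
      rw [adjAt, nx, if_neg (by omega), b1, b2]

/-- Difference table of factorials. -/
def uTab : ℕ → ℕ → ℤ
  | 0, r => (r.factorial : ℤ)
  | k + 1, r => uTab k (r + 1) - uTab k r

lemma uTab_rec (k : ℕ) : ∀ r : ℕ, uTab (k + 2) r =
    ((r : ℤ) + k + 1) * uTab (k + 1) r + ((k : ℤ) + 1) * uTab k r := by
  induction k with
  | zero =>
    intro r
    simp only [uTab, Nat.factorial_succ]
    push_cast
    ring
  | succ k ih =>
    intro r
    have h1 := ih r
    have h2 := ih (r + 1)
    have e3 : uTab (k + 1 + 2) r = uTab (k + 2) (r + 1) - uTab (k + 2) r := rfl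
    have e2 : uTab (k + 1 + 1) r = uTab (k + 1) (r + 1) - uTab (k + 1) r := rfl
    have e1 : uTab (k + 1) r = uTab k (r + 1) - uTab k r := rfl
    have e2' : uTab (k + 2) r = uTab (k + 1) (r + 1) - uTab (k + 1) r := rfl
    push_cast at h2 ⊢
    rw [e3, h2]
    have e4 : uTab (k + 1 + 1) r = uTab (k + 2) r := rfl
    rw [e4]
    linear_combination (-1 : ℤ) * h1 - ((r : ℤ) + k + 2) * e2' - ((k : ℤ) + 1) * e1

lemma cCount_uTab (k : ℕ) : ∀ r : ℕ, (cCount (r + 1 + k) k : ℤ) = uTab k (r + 1) := by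
  induction k with
  | zero => intro r; simp [cCount_zero, uTab]
  | succ k ih =>
    intro r
    have h := cCount_succ (n := r + 1 + k) (k := k) (by omega) (by omega)
    have h1 := ih r
    have h2 := ih (r + 1)
    have e : r + 1 + 1 + k = r + 1 + k + 1 := by omega
    rw [e] at h2
    change (cCount (r + 1 + k + 1) (k + 1) : ℤ) = uTab k (r + 1 + 1) - uTab k (r + 1)
    rw [← h1, ← h2, h]
    push_cast
    ring

lemma cCount_one : cCount 1 1 = 1 := by
  have : cCount 1 1 = cCount 1 0 := by
    refine Nat.card_congr (Equiv.subtypeEquivRight ?_)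
    intro τ
    constructor
    · intro _ i hi
      omega
    · intro _ i hi h
      obtain rfl : i = 0 := by omega
      simp [adjAt, nx] at h
  rw [this, cCount_zero]
  rfl

lemma cCount_diag (k : ℕ) : (cCount (k + 1) (k + 1) : ℤ) = uTab (k + 1) 0 - (-1) ^ (k + 1) := by
  induction k with
  | zero => simp [cCount_one, uTab]
  | succ k ih =>
    have h := cCount_succ (n := k + 1) (k := k + 1) (by omega) (by omega)
    have h1 := cCount_uTab (k + 1) 0
    have e : 0 + 1 + (k + 1) = k + 1 + 1 := by omega
    rw [e, h] at h1
    push_cast at h1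
    have e2 : uTab (k + 1 + 1) 0 = uTab (k + 1) (0 + 1) - uTab (k + 1) 0 := rfl
    rw [e2, ← h1, ih]
    ring

theorem stmt_8 (n : ℕ) (hn : 3 ≤ n) :
    (DCount n : ℤ) =
      ((n : ℤ) - 1) * ((DCount (n - 1) : ℤ) + (DCount (n - 2) : ℤ)) +
        (-1 : ℤ) ^ (n - 1) := by
  obtain ⟨m, rfl⟩ : ∃ m, n = m + 3 := ⟨n - 3, by omega⟩
  have e1 : m + 3 - 1 = m + 1 + 1 := by omega
  have e2 : m + 3 - 2 = m + 1 := by omega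
  rw [e1, e2, DCount_eq _ (by omega), DCount_eq _ (by omega), DCount_eq _ (by omega),
    cCount_diag (m + 2), cCount_diag (m + 1), cCount_diag m]
  have h := uTab_rec (m + 1) 0
  have e3 : m + 1 + 2 = m + 2 + 1 := by omega
  rw [e3] at h
  rw [h]
  push_cast
  ring
end

section
/- For every integer n ≥ 1, the number of permutations of {1,…,n} having exactly one fixed point equals D_n, the number of arrangements of {1,…,n} avoiding all patterns 12, 23, …, (n−1)n, n1; equivalently, the number of permutations of an n-element set with exactly one fixed point equals n·Der_{n−1}. -/
open Polynomial

noncomputable def wt : ℕ → List ℕ → ℤ[X]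
  | _, [] => 1
  | a, b :: l => (if b = a + 1 then X else 1) * wt b l

def dl : ℕ → List ℕ
  | 0 => []
  | m + 1 => (m + 1) :: dl m

lemma wt_insert (t : ℕ) (l : List ℕ) : ∀ a, a < t → (∀ x ∈ l, x < t) →
    ((List.permutations'Aux t l).map (wt a)).sum =
      ((((a :: l).count (t - 1) : ℕ) : ℤ[X]) * (X - 1) + ((l.length : ℕ) : ℤ[X]) + 1) * wt a l
        + (1 - X) * derivative (wt a l) := by
  induction l with
  | nil =>
    intro a ha _
    by_cases h : t = a + 1
    · simp [wt, h]
    · have : ¬ a = t - 1 := by omega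
      simp [wt, h, this]
  | cons y ys ih =>
    intro a ha hl
    have hy : y < t := hl y (by simp)
    have ih' := ih y hy (fun x hx => hl x (by simp [hx]))
    have hm : ((List.map (List.cons y) (List.permutations'Aux t ys)).map (wt a)).sum
        = (if y = a + 1 then X else 1) * ((List.permutations'Aux t ys).map (wt y)).sum := by
      rw [← List.sum_map_mul_left, List.map_map]; rfl
    have ht : wt a (t :: y :: ys) = (if t = a + 1 then X else 1) * wt y ys := by
      have : ¬ y = t + 1 := by omega
      simp [wt, this]
    rw [List.permutations'Aux, List.map_cons, List.sum_cons, hm, ih', ht, List.count_cons (a := t-1) (b := a)]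
    simp only [wt]
    by_cases h1 : y = a + 1
    · have h2 : ¬ t = a + 1 := by omega
      have h3 : ¬ a = t - 1 := by omega
      simp [h1, h2, h3, derivative_mul]; ring
    · by_cases h2 : t = a + 1
      · have h3 : a = t - 1 := by omega
        have h4 : (a == t - 1) = true := by simp [h3]
        simp only [h1, h2, if_true, if_false]
        simp; ring
      · have h3 : ¬ a = t - 1 := by omega
        simp [h1, h2, h3]; ring

noncomputable def PP (m : ℕ) : ℤ[X] := ((dl m).permutations'.map (wt 0)).sum

lemma mem_dl (m x : ℕ) : x ∈ dl m ↔ 1 ≤ x ∧ x ≤ m := by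
  induction m with
  | zero => simp [dl]; omega
  | succ m ih => simp [dl, ih]; omega

lemma nodup_dl (m : ℕ) : (dl m).Nodup := by
  induction m with
  | zero => simp [dl]
  | succ m ih => simp [dl, ih, mem_dl]

lemma length_dl (m : ℕ) : (dl m).length = m := by
  induction m with
  | zero => simp [dl]
  | succ m ih => simp [dl, ih]

lemma PP_succ (m : ℕ) : PP (m + 1) = (X + (m : ℤ[X])) * PP m + (1 - X) * derivative (PP m) := by
  have key : ∀ l ∈ (dl m).permutations', ((List.permutations'Aux (m+1) l).map (wt 0)).sum =
      (X + (m : ℤ[X])) * wt 0 l + (1 - X) * derivative (wt 0 l) := by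
    intro l hl
    rw [List.mem_permutations'] at hl
    have hc : (0 :: l).count (m + 1 - 1) = 1 := by
      apply List.count_eq_one_of_mem
      · rw [List.nodup_cons, hl.nodup_iff, hl.mem_iff, mem_dl]
        exact ⟨by omega, nodup_dl m⟩
      · rw [List.mem_cons, hl.mem_iff, mem_dl]; omega
    rw [wt_insert (m+1) l 0 (by omega) (fun x hx => by
      rw [hl.mem_iff, mem_dl] at hx; omega), hc, hl.length_eq, length_dl]
    push_cast; ring
  have : ∀ L : List (List ℕ), (∀ l ∈ L, ((List.permutations'Aux (m+1) l).map (wt 0)).sum =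
      (X + (m : ℤ[X])) * wt 0 l + (1 - X) * derivative (wt 0 l)) →
      ((L.flatMap (List.permutations'Aux (m+1))).map (wt 0)).sum =
      (X + (m : ℤ[X])) * (L.map (wt 0)).sum + (1 - X) * derivative (L.map (wt 0)).sum := by
    intro L
    induction L with
    | nil => simp
    | cons a L ih =>
      intro h
      rw [List.flatMap_cons, List.map_append, List.sum_append, ih (fun l hl => h l (by simp [hl])),
        h a (by simp), List.map_cons, List.sum_cons, derivative_add]
      ring
  exact this _ key

lemma PP_zero : PP 0 = 1 := by simp [PP, dl, wt]

lemma PP_der (m : ℕ) : derivative (PP (m + 1)) = ((m : ℤ[X]) + 1) * PP m := by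
  induction m with
  | zero => rw [PP_succ, PP_zero]; simp
  | succ m ih =>
    rw [PP_succ (m + 1)]
    rw [derivative_add, derivative_mul, derivative_mul, ih]
    have := PP_succ m
    simp only [derivative_mul, derivative_add, derivative_sub, derivative_X, derivative_natCast, derivative_one]
    push_cast
    linear_combination (-(m:ℤ[X]) - 1) * this

lemma PP_eval (m : ℕ) : (PP m).eval 0 = numDerangements m ∧ (PP (m+1)).eval 0 = numDerangements (m+1) := by
  induction m with
  | zero => simp [PP_succ, PP_zero]
  | succ m ih =>
    refine ⟨ih.2, ?_⟩
    rw [PP_succ, PP_der, numDerangements_add_two]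
    simp [ih.1, ih.2]; ring

def good : ℕ → List ℕ → Prop
  | _, [] => True
  | a, b :: l => b ≠ a + 1 ∧ good b l

instance : ∀ a l, Decidable (good a l)
  | _, [] => inferInstanceAs (Decidable True)
  | a, b :: l => by
    have := instDecidableGood b l
    unfold good; infer_instance

lemma wt_eval (l : List ℕ) : ∀ a, (wt a l).eval 0 = if good a l then 1 else 0 := by
  induction l with
  | nil => simp [wt, good]
  | cons b l ih =>
    intro a
    by_cases h : b = a + 1 <;> simp [wt, good, h, ih]

lemma good_iff (l : List ℕ) : ∀ a, good a l ↔
    ∀ (k : ℕ) (h : k + 1 < (a :: l).length), (a :: l)[k + 1] ≠ (a :: l)[k] + 1 := by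
  induction l with
  | nil => intro a; simp [good]
  | cons b l ih =>
    intro a
    rw [good, ih b]
    constructor
    · rintro ⟨h1, h2⟩ k h
      cases k with
      | zero => simpa using h1
      | succ k => exact h2 k (by simpa using h)
    · intro h
      refine ⟨by simpa using h 0 (by simp), fun k hk => ?_⟩
      exact h (k + 1) (by simpa using hk)

lemma card_good (m : ℕ) :
    Nat.card {l : List ℕ // l.Perm (dl m) ∧ good 0 l} = numDerangements m := by
  have hn : (dl m).permutations'.Nodup :=
    (List.permutations_perm_permutations' _).nodup_iff.1 (List.nodup_permutations _ (nodup_dl m))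
  have h1 : Nat.card {l : List ℕ // l.Perm (dl m) ∧ good 0 l} =
      ((dl m).permutations'.toFinset.filter (good 0)).card := by
    rw [← Nat.card_eq_finsetCard]
    exact Nat.card_congr (Equiv.subtypeEquivRight (fun l => by simp [List.mem_permutations']))
  rw [h1]
  have h2 := (PP_eval m).1
  rw [PP, ← List.sum_toFinset _ hn, eval_finsetSum] at h2
  simp only [wt_eval] at h2
  rw [Finset.sum_boole] at h2
  exact_mod_cast h2

lemma card_one_fixed (m : ℕ) :
    Nat.card {σ : Equiv.Perm (Fin (m+1)) // Nat.card {k : Fin (m+1) // σ k = k} = 1} =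
      (m + 1) * numDerangements m := by
  have e : {σ : Equiv.Perm (Fin (m+1)) // Nat.card {k : Fin (m+1) // σ k = k} = 1} ≃
      Σ a : Fin (m+1), {σ : Equiv.Perm (Fin (m+1)) // ∀ x, ¬ (x ≠ a) ↔ x ∈ Function.fixedPoints σ} := by
    refine Equiv.symm (Equiv.ofBijective (fun p => ⟨p.2.1, ?_⟩) ⟨?_, ?_⟩)
    · rw [Nat.card_eq_one_iff_unique]
      have h := p.2.2
      simp only [not_not, Function.mem_fixedPoints, Function.IsFixedPt] at h
      exact ⟨⟨fun x y => Subtype.ext (((h _).2 x.2).trans ((h _).2 y.2).symm)⟩, ⟨⟨p.1, (h _).1 rfl⟩⟩⟩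
    · rintro ⟨a, s, hs⟩ ⟨b, t, ht⟩ h
      simp only [Subtype.mk.injEq] at h
      subst h
      have : a = b := by
        have := (ht a).2 ((hs a).1 (by simp))
        simpa using this
      subst this
      rfl
    · rintro ⟨s, hs⟩
      rw [Nat.card_eq_one_iff_unique] at hs
      obtain ⟨⟨h1⟩, ⟨⟨a, ha⟩⟩⟩ := hs
      refine ⟨⟨a, s, fun x => ?_⟩, rfl⟩
      simp only [not_not, Function.mem_fixedPoints, Function.IsFixedPt]
      exact ⟨fun h => h ▸ ha, fun h => congrArg Subtype.val (h1 ⟨x, h⟩ ⟨a, ha⟩)⟩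
  rw [Nat.card_congr e, Nat.card_sigma]
  have : ∀ a : Fin (m+1), Nat.card {σ : Equiv.Perm (Fin (m+1)) //
      ∀ x, ¬ (x ≠ a) ↔ x ∈ Function.fixedPoints σ} = numDerangements m := by
    intro a
    rw [← Nat.card_congr (derangements.subtypeEquiv (fun x => x ≠ a)), Nat.card_eq_fintype_card,
      card_derangements_eq_numDerangements]
    congr 1
    simp
  rw [Finset.sum_congr rfl (fun a _ => this a)]
  simp

def cyc (m : ℕ) (σ : Equiv.Perm (Fin (m+1))) : Prop :=
  ∀ k : Fin m, σ k.succ ≠ σ k.castSucc + 1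

lemma cyc_iff (m : ℕ) (σ : Equiv.Perm (Fin (m+1))) :
    (avoidsSucc (m+1) σ ∧ ¬ containsN1 (m+1) σ) ↔ cyc m σ := by
  unfold avoidsSucc containsN1 cyc
  constructor
  · rintro ⟨h1, h2⟩ k hk
    have h1 := h1 k.1 (by omega)
    have hk' := congrArg Fin.val hk
    rw [Fin.val_add_one] at hk'
    split_ifs at hk' with hl
    · exact h2 ⟨k.1, by omega, by
        have := congrArg Fin.val hl
        rw [Fin.val_last] at this
        exact this, hk'⟩
    · exact h1 hk'
  · intro h
    refine ⟨fun k hk he => ?_, ?_⟩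
    · apply h ⟨k, by omega⟩
      apply Fin.ext
      rw [Fin.val_add_one]
      split_ifs with hl
      · exfalso
        have h3 := congrArg Fin.val hl
        have h4 := (σ ⟨k + 1, hk⟩).2
        simp at h3
        omega
      · exact he
    · rintro ⟨k, hk, h1, h2⟩
      apply h ⟨k, by omega⟩
      apply Fin.ext
      rw [Fin.val_add_one]
      rw [if_pos]
      · exact h2
      · apply Fin.ext; simpa using h1

lemma card_cyc (m : ℕ) : Nat.card {σ : Equiv.Perm (Fin (m+1)) // cyc m σ} =
    (m + 1) * Nat.card {σ : Equiv.Perm (Fin (m+1)) // σ 0 = 0 ∧ cyc m σ} := by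
  have e : {σ : Equiv.Perm (Fin (m+1)) // cyc m σ} ≃
      Fin (m+1) × {σ : Equiv.Perm (Fin (m+1)) // σ 0 = 0 ∧ cyc m σ} :=
    { toFun := fun σ => (σ.1 0, ⟨σ.1.trans (Equiv.addRight (-(σ.1 0))), by simp, fun k hk => by
        apply σ.2 k
        simp only [Equiv.trans_apply, Equiv.coe_addRight] at hk
        rw [add_right_comm] at hk
        exact add_right_cancel hk⟩)
      invFun := fun p => ⟨p.2.1.trans (Equiv.addRight p.1), fun k hk => by
        apply p.2.2.2 k
        simp only [Equiv.trans_apply, Equiv.coe_addRight] at hk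
        rw [add_right_comm] at hk
        exact add_right_cancel hk⟩
      left_inv := fun σ => by
        apply Subtype.ext; ext x; simp
      right_inv := fun p => by
        obtain ⟨a, s, h0, hs⟩ := p
        refine Prod.ext (by simp [h0]) (Subtype.ext ?_)
        ext x; simp [h0] }
  rw [Nat.card_congr e, Nat.card_prod]; simp

lemma cons_ofFn (m : ℕ) (σ : Equiv.Perm (Fin (m+1))) (h : σ 0 = 0) :
    0 :: List.ofFn (fun k : Fin m => (σ k.succ).val) =
      List.ofFn (fun k : Fin (m+1) => (σ k).val) := by
  rw [List.ofFn_succ, h]; rfl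

lemma ofFn_perm (m : ℕ) (σ : Equiv.Perm (Fin (m+1))) (h : σ 0 = 0) :
    (List.ofFn (fun k : Fin m => (σ k.succ).val)).Perm (dl m) := by
  rw [List.perm_ext_iff_of_nodup _ (nodup_dl m)]
  · intro x
    rw [mem_dl, List.mem_ofFn]
    constructor
    · rintro ⟨k, rfl⟩
      have : σ k.succ ≠ 0 := by
        rw [← h]; intro hh; exact Fin.succ_ne_zero k (σ.injective hh)
      have h2 : (σ k.succ).val ≠ 0 := fun hh => this (Fin.ext hh)
      have := (σ k.succ).2
      omega
    · rintro ⟨h1, h2⟩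
      have hne : σ.symm ⟨x, by omega⟩ ≠ 0 := by
        intro hh
        rw [Equiv.symm_apply_eq, h] at hh
        have := congrArg Fin.val hh
        simp at this; omega
      obtain ⟨k, hk⟩ := Fin.exists_succ_eq.2 hne
      exact ⟨k, by simp [hk]⟩
  · rw [List.nodup_ofFn]
    intro a b hab
    exact Fin.succ_injective _ (σ.injective (Fin.ext hab))

lemma good_cyc (m : ℕ) (σ : Equiv.Perm (Fin (m+1))) (h : σ 0 = 0) :
    good 0 (List.ofFn (fun k : Fin m => (σ k.succ).val)) ↔ cyc m σ := by
  have h1 : good 0 (List.ofFn (fun k : Fin m => (σ k.succ).val)) ↔ avoidsSucc (m+1) σ := by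
    rw [good_iff]
    simp only [cons_ofFn m σ h, avoidsSucc, List.getElem_ofFn, List.length_cons, List.length_ofFn]
  rw [h1, ← cyc_iff]
  refine ⟨fun hh => ⟨hh, ?_⟩, fun hh => hh.1⟩
  rintro ⟨k, hk, -, h2⟩
  have : σ ⟨k + 1, hk⟩ = σ 0 := by rw [h]; exact Fin.ext h2
  have := congrArg Fin.val (σ.injective this)
  simp at this

lemma card_start (m : ℕ) : Nat.card {σ : Equiv.Perm (Fin (m+1)) // σ 0 = 0 ∧ cyc m σ} =
    Nat.card {l : List ℕ // l.Perm (dl m) ∧ good 0 l} := by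
  refine Nat.card_congr (Equiv.ofBijective (fun σ => ⟨List.ofFn (fun k : Fin m => (σ.1 k.succ).val),
    ofFn_perm m σ.1 σ.2.1, (good_cyc m σ.1 σ.2.1).2 σ.2.2⟩) ⟨?_, ?_⟩)
  · rintro ⟨s, hs, _⟩ ⟨t, ht, _⟩ h
    simp only [Subtype.mk.injEq] at h
    have h := List.ofFn_injective h
    apply Subtype.ext
    ext x
    refine Fin.cases ?_ (fun k => ?_) x
    · simp [hs, ht]
    · exact congrFun h k
  · rintro ⟨l, hl, hg⟩
    have hlen : l.length = m := by rw [hl.length_eq, length_dl]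
    have hlt : ∀ x ∈ 0 :: l, x < m + 1 := by
      intro x hx
      rw [List.mem_cons, hl.mem_iff, mem_dl] at hx; omega
    have hnd : (0 :: l).Nodup := by
      rw [List.nodup_cons, hl.nodup_iff, hl.mem_iff, mem_dl]
      exact ⟨by omega, nodup_dl m⟩
    let f : Fin (m+1) → Fin (m+1) := fun k =>
      ⟨(0 :: l)[k.1]'(by simp only [List.length_cons, hlen]; exact k.2), hlt _ (List.getElem_mem _)⟩
    have hf : Function.Injective f := by
      intro a b hab
      have := congrArg Fin.val hab
      exact Fin.ext ((hnd.getElem_inj_iff).1 this)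
    let s : Equiv.Perm (Fin (m+1)) := Equiv.ofBijective f (Finite.injective_iff_bijective.1 hf)
    have hs0 : s 0 = 0 := Fin.ext rfl
    have hsl : List.ofFn (fun k : Fin m => (s k.succ).val) = l := by
      apply List.ext_getElem
      · simp [hlen]
      · intro i h1 h2
        simp [s, f]
    refine ⟨⟨s, hs0, (good_cyc m s hs0).1 (by rw [hsl]; exact hg)⟩, Subtype.ext hsl⟩

theorem stmt_18 (n : ℕ) (hn : 1 ≤ n) :
    Nat.card {σ : Equiv.Perm (Fin n) // Nat.card {k : Fin n // σ k = k} = 1} =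
      DCount n ∧
    Nat.card {σ : Equiv.Perm (Fin n) // Nat.card {k : Fin n // σ k = k} = 1} =
      n * numDerangements (n - 1) := by
  obtain ⟨m, rfl⟩ : ∃ m, n = m + 1 := ⟨n - 1, by omega⟩
  have h1 := card_one_fixed m
  have h2 : DCount (m + 1) = (m + 1) * numDerangements m := by
    unfold DCount
    rw [← card_good, ← card_start, ← card_cyc]
    exact Nat.card_congr (Equiv.subtypeEquivRight (cyc_iff m))
  exact ⟨h1.trans h2.symm, h1⟩
end
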